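/- Let a = (a_1,…,a_n) and suppose a_i b_j ∉ q^{−ℕ} for all 1 ≤ i, j ≤ n, and 0 < |t| < 1. Then the truncated Milne–Gustafson sum evaluates as I(t;a) = (1−q)ⁿ (q)_∞ⁿ (t a_1⋯a_n b_1⋯b_n)_∞ / [ (t)_∞ · ∏_{i=1}^n ∏_{j=1}^n (a_i b_j)_∞ ] · ∏_{1≤i<j≤n} a_j θ(a_i/a_j). (Multi-dimensional q-binomial theorem; Corollary 3.4 of the paper.) -/

import Mathlib

/-!
Write `z_i = a_i q^{ν_i}` and let `V` denote the Vandermonde determinant. The summand of `I(t;a)`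
vanishes off the cone `ν ≥ 0` and is bounded there apart from the power of `t`, so `I(t;a)` is
`(1 - q)^n` times a function `F(t) = ∑_ν t^|ν| g(ν)` continuous at `t = 0`, where
`g(ν) = ∏_i w(z_i) · V(z)` with `w(z) = ∏_j (q z / a_j)_∞ / (b_j z)_∞`. It suffices to prove the
q-difference equation `(1 - t) F(t) = (1 - t a₁⋯aₙ b₁⋯bₙ) F(qt)`: iterating it gives
`(t)_∞ F(t) = (t a₁⋯aₙ b₁⋯bₙ)_∞ g(0)`.

Lagrange interpolation, with denominators cleared by Cramer's rule, says
`∑_k P(z_k) V(z with z_k replaced by 0) = P(0) V(z)` for every polynomial `P` of degree `< n`,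
whether or not the `z_k` are distinct. For `P = ∏_j (1 - c_j X) - ∏_j (c_j z_j - c_j X)` it becomes
`∑_k ∏_j (1 - c_j z_k) V(z with z_k replaced by 0) = (1 - ∏_j c_j z_j) V(z)`.
Take `c_j = 1 / a_j` and then `c_j = b_j`: the right-hand sides are `1 - q^|ν|` and
`1 - a₁⋯aₙ b₁⋯bₙ q^|ν|` times `V(z)`. After multiplication by `∏_i w(z_i)`, the `k`-th term of
the first expansion at `ν + e_k` is the `k`-th term of the second at `ν`, since the determinant no
longer involves `z_k` and `w(qz) ∏_j (1 - qz / a_j) = w(z) ∏_j (1 - b_j z)`. Summing over `ν` gives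
the q-difference equation.
-/

open scoped BigOperators
open Finset

/-- The infinite q-Pochhammer symbol `(a)_∞ = ∏_{i=0}^∞ (1 - qⁱ a)`. -/
noncomputable def qp (q a : ℂ) : ℂ := ∏' i : ℕ, (1 - q ^ i * a)

/-- The theta function `θ(a) = (a)_∞ (q/a)_∞`. -/
noncomputable def th (q a : ℂ) : ℂ := qp q a * qp q (q / a)

/-- Summand of the normalized Jackson integral of Milne–Gustafson type. -/
noncomputable def mgTerm {n : ℕ} (q t : ℂ) (a b x : Fin n → ℂ) (ν : Fin n → ℤ) : ℂ :=
  t ^ (∑ i, ν i) *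
    (∏ i, ∏ j, qp q (q * (a j)⁻¹ * (x i * q ^ ν i)) / qp q (b j * (x i * q ^ ν i))) *
    ∏ i, ∏ j ∈ Finset.Ioi i, (x j * q ^ ν j - x i * q ^ ν i)

/-- The normalized Jackson integral of Milne–Gustafson type `I(t;x)`. -/
noncomputable def mgSum {n : ℕ} (q t : ℂ) (a b x : Fin n → ℂ) : ℂ :=
  (1 - q) ^ n * ∑' ν : Fin n → ℤ, mgTerm q t a b x ν

namespace MilneGustafson

open Filter Topology Asymptotics Polynomial

/-! ### The infinite q-Pochhammer symbol -/

section Pochhammer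

variable {q : ℂ}

lemma summable_norm_pow_mul (hq : ‖q‖ < 1) (x : ℂ) : Summable fun i : ℕ => ‖q ^ i * x‖ := by
  simpa only [norm_mul, norm_pow] using
    (summable_geometric_of_lt_one (norm_nonneg q) hq).mul_right ‖x‖

lemma multipliable_one_sub_pow_mul (hq : ‖q‖ < 1) (x : ℂ) :
    Multipliable fun i : ℕ => 1 - q ^ i * x := by
  simpa only [sub_eq_add_neg] using multipliable_one_add_of_summable
    (f := fun i : ℕ => -(q ^ i * x)) (by simpa only [norm_neg] using summable_norm_pow_mul hq x)

lemma qp_eq_one_sub_mul_qp (hq : ‖q‖ < 1) (x : ℂ) : qp q x = (1 - x) * qp q (q * x) := by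
  have htail : Multipliable fun i : ℕ => 1 - q ^ (i + 1) * x := by
    simpa only [pow_succ, mul_assoc] using multipliable_one_sub_pow_mul hq (q * x)
  simpa only [qp, pow_zero, one_mul, pow_succ, mul_assoc] using
    tprod_eq_zero_mul' (f := fun i : ℕ => 1 - q ^ i * x) htail

lemma qp_ne_zero (hq : ‖q‖ < 1) {x : ℂ} (hx : ∀ i : ℕ, q ^ i * x ≠ 1) : qp q x ≠ 0 := by
  simpa only [qp, sub_eq_add_neg] using tprod_one_add_ne_zero_of_summable
    (f := fun i : ℕ => -(q ^ i * x))
    (fun i => by rw [← sub_eq_add_neg]; exact sub_ne_zero.2 (hx i).symm)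
    (by simpa only [norm_neg] using summable_norm_pow_mul hq x)

lemma norm_pow_mul_lt_one (hq : ‖q‖ ≤ 1) {x : ℂ} (hx : ‖x‖ < 1) (m : ℕ) : ‖q ^ m * x‖ < 1 := by
  rw [norm_mul, norm_pow]
  exact mul_lt_one_of_nonneg_of_lt_one_right (pow_le_one₀ (norm_nonneg q) hq) (norm_nonneg x) hx

lemma qp_ne_zero_of_norm_lt_one (hq : ‖q‖ < 1) {x : ℂ} (hx : ‖x‖ < 1) : qp q x ≠ 0 := by
  refine qp_ne_zero hq fun i h => ?_
  have hlt := norm_pow_mul_lt_one hq.le hx i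
  rw [h, norm_one] at hlt
  exact lt_irrefl 1 hlt

lemma qp_zpow_eq_zero (hq0 : q ≠ 0) {m : ℤ} (hm : m ≤ 0) : qp q (q ^ m) = 0 := by
  obtain ⟨k, rfl⟩ := Int.exists_eq_neg_ofNat hm
  exact tprod_of_exists_eq_zero ⟨k, by simp [hq0]⟩

lemma tendsto_prod_range_qp (hq : ‖q‖ < 1) (x : ℂ) :
    Tendsto (fun m : ℕ => ∏ k ∈ range m, (1 - q ^ k * x)) atTop (𝓝 (qp q x)) :=
  (multipliable_one_sub_pow_mul hq x).tendsto_prod_tprod_nat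

lemma tendsto_qp_nhds_zero (hq : ‖q‖ < 1) : Tendsto (qp q) (𝓝 0) (𝓝 1) := by
  have hlim := tendsto_tprod_one_add_of_dominated_convergence (𝓕 := 𝓝 (0 : ℂ))
    (f := fun x (i : ℕ) => -(q ^ i * x)) (g := fun _ => 0)
    (summable_geometric_of_lt_one (norm_nonneg q) hq)
    (fun i => Continuous.tendsto' (by fun_prop) _ _ (by simp)) ?_
  · simp only [← sub_eq_add_neg, add_zero, tprod_one] at hlim
    exact hlim
  · filter_upwards [Metric.closedBall_mem_nhds (0 : ℂ) one_pos] with x hx i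
    rw [norm_neg, norm_mul, norm_pow]
    exact mul_le_of_le_one_right (by positivity) (mem_closedBall_zero_iff.1 hx)

lemma tendsto_mul_pow_nhds_zero (hq : ‖q‖ < 1) (x : ℂ) :
    Tendsto (fun m : ℕ => x * q ^ m) atTop (𝓝 0) := by
  simpa only [mul_zero] using (tendsto_pow_atTop_nhds_zero_of_norm_lt_one hq).const_mul x

lemma qp_mul_eq_of_qdiff (hq : ‖q‖ < 1) {F : ℂ → ℂ} (hF : ContinuousAt F 0) {c : ℂ}
    (hdiff : ∀ t, ‖t‖ < 1 → (1 - t) * F t = (1 - t * c) * F (q * t)) {t : ℂ} (ht : ‖t‖ < 1) :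
    qp q t * F t = qp q (t * c) * F 0 := by
  have hiter (m : ℕ) : (∏ k ∈ range m, (1 - q ^ k * t)) * F t =
      (∏ k ∈ range m, (1 - q ^ k * (t * c))) * F (q ^ m * t) := by
    induction m with
    | zero => simp
    | succ m ih =>
      rw [prod_range_succ, prod_range_succ, pow_succ', mul_assoc q]
      linear_combination (1 - q ^ m * t) * ih +
        (∏ k ∈ range m, (1 - q ^ k * (t * c))) * hdiff _ (norm_pow_mul_lt_one hq.le ht m)
  have hzero : Tendsto (fun m : ℕ => q ^ m * t) atTop (𝓝 0) := by
    simpa only [mul_comm t] using tendsto_mul_pow_nhds_zero hq t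
  refine tendsto_nhds_unique ((tendsto_prod_range_qp hq t).mul_const (F t)) ?_
  exact ((tendsto_prod_range_qp hq (t * c)).mul (hF.tendsto.comp hzero)).congr
    fun m => (hiter m).symm

end Pochhammer

/-! ### Lagrange interpolation without denominators -/

section Interpolation

variable {R : Type*} [CommRing R] {n : ℕ}

lemma vandermonde_update (z : Fin n → R) (k : Fin n) (y : R) :
    Matrix.vandermonde (Function.update z k y) =
      (Matrix.vandermonde z).updateRow k fun j => y ^ (j : ℕ) := by
  ext i j
  rcases eq_or_ne i k with rfl | hik
  · simp [Matrix.vandermonde_apply]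
  · simp [Matrix.vandermonde_apply, hik]

/-- By Cramer's rule, the determinants on the left are the coordinates of `det V • (1, y, y², …)`
with respect to the rows of the Vandermonde matrix `V`. -/
lemma sum_eval_mul_det_vandermonde_update {P : R[X]} (hP : P.degree < n) (z : Fin n → R) (y : R) :
    ∑ k, P.eval (z k) * (Matrix.vandermonde (Function.update z k y)).det =
      P.eval y * (Matrix.vandermonde z).det := by
  have heval (x : R) : P.eval x = ∑ j : Fin n, P.coeff j * x ^ (j : ℕ) := by
    rw [eval_eq_sum, ← sum_fin (fun e r => r * x ^ e) (fun _ => zero_mul _) hP]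
  have hcramer := (Matrix.vandermonde z).transpose.mulVec_cramer fun j : Fin n => y ^ (j : ℕ)
  have hrow (j : Fin n) :
      ∑ k, z k ^ (j : ℕ) * (Matrix.vandermonde (Function.update z k y)).det =
        (Matrix.vandermonde z).det * y ^ (j : ℕ) := by
    simpa [Matrix.mulVec, dotProduct, Matrix.cramer_transpose_apply, vandermonde_update,
      Matrix.vandermonde_apply] using congrFun hcramer j
  simp_rw [heval, sum_mul]
  rw [sum_comm]
  refine sum_congr rfl fun j _ => ?_
  simp_rw [mul_assoc]
  rw [← mul_sum, hrow, mul_comm (y ^ _)]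

lemma degree_prod_C_sub_sub_prod_C_sub_lt (u v c : Fin n → R) :
    (∏ j, (C (u j) - C (c j) * X) - ∏ j, (C (v j) - C (c j) * X) : R[X]).degree < n := by
  have hlinear (w : R) (j : Fin n) : (C w - C (c j) * X).natDegree ≤ 1 := by compute_degree
  have hdeg (w : Fin n → R) : (∏ j, (C (w j) - C (c j) * X)).natDegree ≤ n := by
    simpa using (natDegree_prod_le univ _).trans (sum_le_sum fun j _ => hlinear (w j) j)
  have hcoeff (w : Fin n → R) : (∏ j, (C (w j) - C (c j) * X)).coeff n = ∏ j, -c j := by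
    have h := coeff_prod_of_natDegree_le univ (fun j => C (w j) - C (c j) * X) 1
      fun j _ => hlinear (w j) j
    simpa [coeff_C] using h
  refine (degree_lt_iff_coeff_zero _ _).2 fun m hm => ?_
  rw [coeff_sub]
  rcases hm.eq_or_lt with rfl | hlt
  · rw [hcoeff, hcoeff, sub_self]
  · rw [coeff_eq_zero_of_natDegree_lt ((hdeg u).trans_lt hlt),
      coeff_eq_zero_of_natDegree_lt ((hdeg v).trans_lt hlt), sub_self]

lemma sum_prod_one_sub_mul_det_vandermonde_update (c z : Fin n → R) :
    ∑ k, (∏ j, (1 - c j * z k)) * (Matrix.vandermonde (Function.update z k 0)).det =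
      (1 - ∏ j, c j * z j) * (Matrix.vandermonde z).det := by
  have heval (x : R) : eval x (∏ j, (C 1 - C (c j) * X) - ∏ j, (C (c j * z j) - C (c j) * X)) =
      ∏ j, (1 - c j * x) - ∏ j, (c j * z j - c j * x) := by
    simp [eval_prod]
  have hinterp := sum_eval_mul_det_vandermonde_update
    (degree_prod_C_sub_sub_prod_C_sub_lt (fun _ => 1) (fun j => c j * z j) c) z 0
  have hnode (k : Fin n) : ∏ j, (c j * z j - c j * z k) = 0 :=
    prod_eq_zero (mem_univ k) (sub_self _)
  simpa only [heval, hnode, mul_zero, sub_zero, prod_const_one] using hinterp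

end Interpolation

/-! ### Boundedness -/

section Boundedness

variable {α : Type*} {n : ℕ} {l : Filter α}

lemma boundedAtFilter_comp_apply {ι E : Type*} [NormedAddCommGroup E] {f : ℕ → E} {L : E}
    (hf : Tendsto f atTop (𝓝 L)) (i : ι) : BoundedAtFilter ⊤ fun ν : ι → ℕ => f (ν i) := by
  have hbound : BoundedAtFilter ⊤ f := by
    obtain ⟨C, hC⟩ := isBigO_one_nat_atTop_iff.1 (hf.isBigO_one ℝ)
    exact isBigO_top.2 ⟨C, by simpa using hC⟩
  exact hbound.comp_tendsto tendsto_top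

lemma boundedAtFilter_prod {ι : Type} {𝕜 : Type*} [SeminormedCommRing 𝕜] {s : Finset ι}
    {f : ι → α → 𝕜} (hf : ∀ i ∈ s, BoundedAtFilter l (f i)) :
    BoundedAtFilter l fun x => ∏ i ∈ s, f i x := by
  simpa only [prod_fn] using BoundedAtFilter.prod s hf

lemma boundedAtFilter_det_vandermonde {𝕜 : Type*} [SeminormedCommRing 𝕜] {z : α → Fin n → 𝕜}
    (hz : ∀ i, BoundedAtFilter l fun x => z x i) :
    BoundedAtFilter l fun x => (Matrix.vandermonde (z x)).det := by
  simp only [Matrix.det_vandermonde]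
  exact boundedAtFilter_prod fun i _ => boundedAtFilter_prod fun j _ => (hz j).sub (hz i)

end Boundedness

/-! ### Power series in the total degree -/

section DegreeSeries

variable {n : ℕ} {c : (Fin n → ℕ) → ℂ} {q t : ℂ}

lemma summable_pi_prod {α : Type*} {f : Fin n → α → ℝ} (hf : ∀ i, Summable (f i))
    (hf0 : ∀ i, 0 ≤ f i) : Summable fun ν : Fin n → α => ∏ i, f i (ν i) := by
  induction n with
  | zero => exact Summable.of_finite
  | succ n ih =>
    rw [← (Fin.consEquiv fun _ : Fin (n + 1) => α).summable_iff]
    refine ((hf 0).mul_of_nonneg (ih (fun i => hf i.succ) fun i => hf0 i.succ) (hf0 0)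
      fun ν => prod_nonneg fun i _ => hf0 i.succ _).congr fun p => ?_
    simp [Fin.consEquiv, Fin.prod_univ_succ]

lemma summable_pow_sum {r : ℝ} (hr0 : 0 ≤ r) (hr1 : r < 1) :
    Summable fun ν : Fin n → ℕ => r ^ ∑ i, ν i := by
  simpa only [prod_pow_eq_pow_sum] using
    summable_pi_prod (n := n) (fun _ => summable_geometric_of_lt_one hr0 hr1)
      fun _ m => pow_nonneg hr0 m

/-- The power series `∑_ν t^|ν| c(ν)` over `ν ∈ ℕⁿ`, where `|ν| = ν₁ + ⋯ + νₙ`. Boundedness of the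
coefficients is expressed by `BoundedAtFilter ⊤ c`. -/
noncomputable def degreeSeries (c : (Fin n → ℕ) → ℂ) (t : ℂ) : ℂ :=
  ∑' ν, t ^ (∑ i, ν i) * c ν

lemma summable_degreeSeries (hc : BoundedAtFilter ⊤ c) (ht : ‖t‖ < 1) :
    Summable fun ν => t ^ (∑ i, ν i) * c ν := by
  obtain ⟨C, hC⟩ := isBigO_top.1 hc
  refine Summable.of_norm_bounded ((summable_pow_sum (norm_nonneg t) ht).mul_right C) fun ν => ?_
  rw [norm_mul, norm_pow]
  exact mul_le_mul_of_nonneg_left (by simpa using hC ν) (by positivity)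

lemma degreeSeries_zero : degreeSeries c 0 = c 0 := by
  rw [degreeSeries, tsum_eq_single 0]
  · simp
  · intro ν hν
    have hdeg : ∑ i, ν i ≠ 0 := fun h => hν <| funext fun i => sum_eq_zero_iff.1 h i (mem_univ i)
    rw [zero_pow hdeg, zero_mul]

lemma continuousAt_degreeSeries_zero (hc : BoundedAtFilter ⊤ c) :
    ContinuousAt (degreeSeries c) 0 := by
  obtain ⟨C, hC⟩ := isBigO_top.1 hc
  have hr : (0 : ℝ) < 1 / 2 := by norm_num
  refine (continuousOn_tsum (s := Metric.closedBall 0 (1 / 2)) (fun ν => by fun_prop)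
    ((summable_pow_sum hr.le (by norm_num)).mul_right C) fun ν t ht => ?_).continuousAt
    (Metric.closedBall_mem_nhds 0 hr)
  rw [norm_mul, norm_pow]
  exact mul_le_mul (pow_le_pow_left₀ (norm_nonneg t) (mem_closedBall_zero_iff.1 ht) _)
    (by simpa using hC ν) (norm_nonneg _) (by positivity)

lemma degreeSeries_finsetSum {ι : Type*} {s : Finset ι} {c : ι → (Fin n → ℕ) → ℂ}
    (hc : ∀ k ∈ s, BoundedAtFilter ⊤ (c k)) (ht : ‖t‖ < 1) :
    degreeSeries (fun ν => ∑ k ∈ s, c k ν) t = ∑ k ∈ s, degreeSeries (c k) t := by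
  simp only [degreeSeries, mul_sum]
  exact Summable.tsum_finsetSum fun k hk => summable_degreeSeries (hc k hk) ht

lemma degreeSeries_one_sub_mul_pow (hc : BoundedAtFilter ⊤ c) (hq : ‖q‖ ≤ 1) (ht : ‖t‖ < 1)
    (s : ℂ) : degreeSeries (fun ν => (1 - s * q ^ ∑ i, ν i) * c ν) t =
      degreeSeries c t - s * degreeSeries c (q * t) := by
  have hqt : ‖q * t‖ < 1 := by simpa only [pow_one] using norm_pow_mul_lt_one hq ht 1
  simp only [degreeSeries]
  rw [← tsum_mul_left, ← (summable_degreeSeries hc ht).tsum_sub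
    ((summable_degreeSeries hc hqt).mul_left s)]
  exact tsum_congr fun ν => by rw [mul_pow]; ring

lemma degreeSeries_eq_mul_of_eq_zero {k : Fin n} (hk : ∀ ν, ν k = 0 → c ν = 0) :
    degreeSeries c t = t * degreeSeries (fun ν => c (ν + Pi.single k 1)) t := by
  have hsupp : (Function.support fun ν => t ^ (∑ i, ν i) * c ν) ⊆
      Set.range fun ν : Fin n → ℕ => ν + Pi.single k 1 := by
    intro ν hν
    have hνk : ν k ≠ 0 := fun h => hν (by simp only [hk ν h, mul_zero])
    refine ⟨ν - Pi.single k 1, tsub_add_cancel_of_le fun i => ?_⟩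
    rcases eq_or_ne i k with rfl | hik
    · simpa using Nat.one_le_iff_ne_zero.2 hνk
    · simp [hik]
  rw [degreeSeries, ← (add_left_injective (Pi.single k 1)).tsum_eq hsupp, degreeSeries,
    ← tsum_mul_left]
  refine tsum_congr fun ν => ?_
  have hdeg : ∑ i, (ν + Pi.single k 1 : Fin n → ℕ) i = ∑ i, ν i + 1 := by simp [sum_add_distrib]
  rw [hdeg, pow_succ']
  ring

/-- Expand `1 - q^|ν|`, shift the `k`-th summand by `e_k`, and resum. -/
lemma degreeSeries_qdiff {e : Fin n → (Fin n → ℕ) → ℂ} {s : ℂ}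
    (hc : BoundedAtFilter ⊤ c) (he : ∀ k, BoundedAtFilter ⊤ (e k))
    (he0 : ∀ k ν, ν k = 0 → e k ν = 0)
    (hsum : ∀ ν, ∑ k, e k ν = (1 - q ^ ∑ i, ν i) * c ν)
    (hshift : ∀ ν, ∑ k, e k (ν + Pi.single k 1) = (1 - s * q ^ ∑ i, ν i) * c ν)
    (hq : ‖q‖ ≤ 1) (ht : ‖t‖ < 1) :
    (1 - t) * degreeSeries c t = (1 - t * s) * degreeSeries c (q * t) := by
  have hshifted (k : Fin n) : BoundedAtFilter ⊤ fun ν : Fin n → ℕ => e k (ν + Pi.single k 1) :=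
    (he k).comp_tendsto tendsto_top
  have hexpand : degreeSeries c t - degreeSeries c (q * t) =
      t * (degreeSeries c t - s * degreeSeries c (q * t)) := calc
    _ = degreeSeries (fun ν => ∑ k, e k ν) t := by
      simpa only [hsum, one_mul] using (degreeSeries_one_sub_mul_pow hc hq ht 1).symm
    _ = ∑ k, degreeSeries (e k) t := degreeSeries_finsetSum (fun k _ => he k) ht
    _ = t * ∑ k, degreeSeries (fun ν => e k (ν + Pi.single k 1)) t := by
      rw [mul_sum]
      exact sum_congr rfl fun k _ => degreeSeries_eq_mul_of_eq_zero (he0 k)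
    _ = t * degreeSeries (fun ν => ∑ k, e k (ν + Pi.single k 1)) t := by
      rw [degreeSeries_finsetSum (fun k _ => hshifted k) ht]
    _ = _ := by simp only [hshift, degreeSeries_one_sub_mul_pow hc hq ht s]
  linear_combination hexpand

end DegreeSeries

/-! ### The summand on the cone `ν ≥ 0` -/

section Coefficients

variable {n : ℕ} {q : ℂ} {a b : Fin n → ℂ}

/-- The one-variable factor `w(z) = ∏_j (q z / a_j)_∞ / (b_j z)_∞` of the summand. -/
noncomputable def weight (q : ℂ) (a b : Fin n → ℂ) (z : ℂ) : ℂ :=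
  ∏ j, qp q (q * (a j)⁻¹ * z) / qp q (b j * z)

/-- The point `z = a q^ν` of the lattice, restricted to exponents `ν ∈ ℕⁿ`. -/
noncomputable def latticePoint (q : ℂ) (a : Fin n → ℂ) (ν : Fin n → ℕ) (i : Fin n) : ℂ :=
  a i * q ^ ν i

/-- The coefficient `∏_i w(z_i) · V(z)` of `t^|ν|` in `I(t;a) / (1 - q)^n`, at `z = a q^ν`. -/
noncomputable def mgCoeff (q : ℂ) (a b : Fin n → ℂ) (ν : Fin n → ℕ) : ℂ :=
  (∏ i, weight q a b (latticePoint q a ν i)) * (Matrix.vandermonde (latticePoint q a ν)).det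

/-- The `k`-th interpolation term in the expansion of `(1 - ∏_j c_j z_j) · mgCoeff q a b ν`, at
`z = a q^ν`. -/
noncomputable def interpCoeff (q : ℂ) (a b c : Fin n → ℂ) (k : Fin n) (ν : Fin n → ℕ) : ℂ :=
  (∏ i, weight q a b (latticePoint q a ν i)) * ((∏ j, (1 - c j * latticePoint q a ν k)) *
    (Matrix.vandermonde (Function.update (latticePoint q a ν) k 0)).det)

lemma weight_mul_prod_one_sub (hq : ‖q‖ < 1) {z : ℂ} (hz : ∀ j, b j * z ≠ 1) :
    weight q a b (q * z) * ∏ j, (1 - (a j)⁻¹ * (q * z)) =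
      weight q a b z * ∏ j, (1 - b j * z) := by
  rw [weight, weight, ← prod_mul_distrib, ← prod_mul_distrib]
  refine prod_congr rfl fun j _ => ?_
  have hnum : qp q (q * (a j)⁻¹ * z) =
      (1 - (a j)⁻¹ * (q * z)) * qp q (q * (a j)⁻¹ * (q * z)) := by
    have harg : q * (a j)⁻¹ * z = (a j)⁻¹ * (q * z) := by ring
    rw [harg, qp_eq_one_sub_mul_qp hq, ← mul_assoc q]
  have hden : qp q (b j * z) = (1 - b j * z) * qp q (b j * (q * z)) := by
    rw [qp_eq_one_sub_mul_qp hq, mul_left_comm q]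
  have hne : 1 - b j * z ≠ 0 := sub_ne_zero.2 (hz j).symm
  rw [hnum, hden, mul_comm (1 - b j * z), ← div_div, div_mul_cancel₀ _ hne, div_mul_eq_mul_div,
    mul_comm]

lemma tendsto_weight_nhds_zero (hq : ‖q‖ < 1) : Tendsto (weight q a b) (𝓝 0) (𝓝 1) := by
  have hqp (s : ℂ) : Tendsto (fun z => qp q (s * z)) (𝓝 0) (𝓝 1) :=
    (tendsto_qp_nhds_zero hq).comp (Continuous.tendsto' (by fun_prop) _ _ (mul_zero s))
  have hlim := tendsto_finsetProd univ
    fun j _ => (hqp (q * (a j)⁻¹)).div (hqp (b j)) one_ne_zero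
  simp only [Pi.div_apply, div_one, prod_const_one] at hlim
  exact hlim

lemma boundedAtFilter_latticePoint (hq : ‖q‖ < 1) (i : Fin n) :
    BoundedAtFilter ⊤ fun ν => latticePoint q a ν i :=
  boundedAtFilter_comp_apply (tendsto_mul_pow_nhds_zero hq (a i)) i

lemma boundedAtFilter_prod_weight (hq : ‖q‖ < 1) :
    BoundedAtFilter ⊤ fun ν => ∏ i, weight q a b (latticePoint q a ν i) :=
  boundedAtFilter_prod fun i _ => boundedAtFilter_comp_apply
    ((tendsto_weight_nhds_zero hq).comp (tendsto_mul_pow_nhds_zero hq (a i))) i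

lemma boundedAtFilter_mgCoeff (hq : ‖q‖ < 1) : BoundedAtFilter ⊤ (mgCoeff q a b) :=
  (boundedAtFilter_prod_weight hq).mul
    (boundedAtFilter_det_vandermonde (boundedAtFilter_latticePoint hq))

lemma boundedAtFilter_interpCoeff (hq : ‖q‖ < 1) (c : Fin n → ℂ) (k : Fin n) :
    BoundedAtFilter ⊤ (interpCoeff q a b c k) := by
  have hfactor (j : Fin n) : BoundedAtFilter ⊤ fun ν => 1 - c j * latticePoint q a ν k :=
    (const_boundedAtFilter ⊤ 1).sub ((boundedAtFilter_latticePoint hq k).smul (c j))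
  have hupdate (i : Fin n) :
      BoundedAtFilter ⊤ fun ν => Function.update (latticePoint q a ν) k 0 i := by
    rcases eq_or_ne i k with rfl | hik
    · simp only [Function.update_self]
      exact const_boundedAtFilter ⊤ 0
    · simpa only [Function.update_of_ne hik] using boundedAtFilter_latticePoint hq i
  exact (boundedAtFilter_prod_weight hq).mul
    ((boundedAtFilter_prod fun j _ => hfactor j).mul (boundedAtFilter_det_vandermonde hupdate))

lemma sum_interpCoeff (c : Fin n → ℂ) (ν : Fin n → ℕ) :
    ∑ k, interpCoeff q a b c k ν =
      (1 - (∏ i, c i * a i) * q ^ ∑ i, ν i) * mgCoeff q a b ν := by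
  have hprod : ∏ i, c i * latticePoint q a ν i = (∏ i, c i * a i) * q ^ ∑ i, ν i := by
    simp only [latticePoint, ← mul_assoc, prod_mul_distrib, prod_pow_eq_pow_sum]
  simp only [interpCoeff]
  rw [← mul_sum, sum_prod_one_sub_mul_det_vandermonde_update, hprod, mgCoeff]
  ring

lemma latticePoint_add_single (ν : Fin n → ℕ) (k : Fin n) :
    latticePoint q a (ν + Pi.single k 1) =
      Function.update (latticePoint q a ν) k (q * latticePoint q a ν k) := by
  ext i
  rcases eq_or_ne i k with rfl | hik
  · simp [latticePoint, pow_succ', mul_left_comm]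
  · simp [latticePoint, hik]

lemma interpCoeff_inv_eq_zero (ha : ∀ i, a i ≠ 0) {k : Fin n} {ν : Fin n → ℕ} (hν : ν k = 0) :
    interpCoeff q a b (fun j => (a j)⁻¹) k ν = 0 := by
  have hfactor : ∏ j, (1 - (a j)⁻¹ * latticePoint q a ν k) = 0 :=
    prod_eq_zero (mem_univ k) (by simp [latticePoint, hν, ha k])
  rw [interpCoeff, hfactor, zero_mul, mul_zero]

lemma interpCoeff_inv_add_single (hq : ‖q‖ < 1)
    (hab : ∀ i j, ∀ m : ℕ, a i * b j ≠ (q ^ m)⁻¹) (k : Fin n) (ν : Fin n → ℕ) :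
    interpCoeff q a b (fun j => (a j)⁻¹) k (ν + Pi.single k 1) = interpCoeff q a b b k ν := by
  have hpole (j : Fin n) : b j * latticePoint q a ν k ≠ 1 := fun h =>
    hab k j (ν k) (eq_inv_of_mul_eq_one_left (by rw [← h, latticePoint]; ring))
  have hshift := weight_mul_prod_one_sub (a := a) hq hpole
  simp only [interpCoeff, latticePoint_add_single, Function.update_self, Function.update_idem]
  set z := latticePoint q a ν
  have hrest : ∏ i ∈ univ.erase k, weight q a b (Function.update z k (q * z k) i) =
      ∏ i ∈ univ.erase k, weight q a b (z i) :=
    prod_congr rfl fun i hi => by rw [Function.update_of_ne (ne_of_mem_erase hi)]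
  rw [← mul_prod_erase _ _ (mem_univ k), Function.update_self, hrest,
    ← mul_prod_erase _ (fun i => weight q a b (z i)) (mem_univ k)]
  linear_combination ((∏ i ∈ univ.erase k, weight q a b (z i)) *
    (Matrix.vandermonde (Function.update z k 0)).det) * hshift

lemma degreeSeries_mgCoeff_qdiff (hq : ‖q‖ < 1) (ha : ∀ i, a i ≠ 0)
    (hab : ∀ i j, ∀ m : ℕ, a i * b j ≠ (q ^ m)⁻¹) {t : ℂ} (ht : ‖t‖ < 1) :
    (1 - t) * degreeSeries (mgCoeff q a b) t =
      (1 - t * ∏ i, b i * a i) * degreeSeries (mgCoeff q a b) (q * t) := by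
  refine degreeSeries_qdiff (e := interpCoeff q a b fun j => (a j)⁻¹) (boundedAtFilter_mgCoeff hq)
    (boundedAtFilter_interpCoeff hq _) (fun k ν => interpCoeff_inv_eq_zero ha) (fun ν => ?_)
    (fun ν => ?_) hq.le ht
  · simp only [sum_interpCoeff, inv_mul_cancel₀ (ha _), prod_const_one, one_mul]
  · simp only [interpCoeff_inv_add_single hq hab, sum_interpCoeff]

lemma prod_qp_mul_det_vandermonde (hq : ‖q‖ < 1) (ha : ∀ i, a i ≠ 0) :
    (∏ i, ∏ j, qp q (q * (a j)⁻¹ * a i)) * (Matrix.vandermonde a).det =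
      qp q q ^ n * ∏ i, ∏ j ∈ Ioi i, a j * th q (a i / a j) := by
  have hdiag (i : Fin n) : qp q (q * (a i)⁻¹ * a i) = qp q q := by
    rw [inv_mul_cancel_right₀ (ha i)]
  have hpairs : ∏ i, ∏ j, qp q (q * (a j)⁻¹ * a i) = qp q q ^ n *
      ∏ i, ∏ j ∈ Ioi i, qp q (q * (a j)⁻¹ * a i) * qp q (q * (a i)⁻¹ * a j) := by
    rw [prod_prod_Ioi_mul_eq_prod_prod_off_diag fun j i => qp q (q * (a j)⁻¹ * a i)]
    have hpow : qp q q ^ n = ∏ i, qp q (q * (a i)⁻¹ * a i) := by simp [hdiag]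
    rw [hpow, ← prod_mul_distrib]
    exact prod_congr rfl fun i _ => Fintype.prod_eq_mul_prod_compl i _
  have htheta (i j : Fin n) : qp q (q * (a j)⁻¹ * a i) * qp q (q * (a i)⁻¹ * a j) *
      (a j - a i) = a j * th q (a i / a j) := by
    have hi := ha i
    have hj := ha j
    have hmul : q * (a i / a j) = q * (a j)⁻¹ * a i := by ring
    have hdiv : q / (a i / a j) = q * (a i)⁻¹ * a j := by field_simp
    rw [th, qp_eq_one_sub_mul_qp hq (a i / a j), hmul, hdiv]
    field_simp
  rw [hpairs, Matrix.det_vandermonde, mul_assoc]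
  simp only [← prod_mul_distrib, htheta]

lemma mgCoeff_zero (hq : ‖q‖ < 1) (ha : ∀ i, a i ≠ 0) :
    mgCoeff q a b 0 = qp q q ^ n / (∏ i, ∏ j, qp q (a i * b j)) *
      ∏ i, ∏ j ∈ Ioi i, a j * th q (a i / a j) := by
  have hbase : latticePoint q a 0 = a := by ext i; simp [latticePoint]
  simp only [mgCoeff, hbase, weight, prod_div_distrib, mul_comm (b _)]
  rw [div_mul_eq_mul_div, prod_qp_mul_det_vandermonde hq ha, mul_div_right_comm]

lemma mgTerm_natCast (t : ℂ) (ν : Fin n → ℕ) :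
    mgTerm q t a b a (fun i => (ν i : ℤ)) = t ^ (∑ i, ν i) * mgCoeff q a b ν := by
  simp only [mgTerm, mgCoeff, weight, latticePoint, Matrix.det_vandermonde, ← Nat.cast_sum,
    zpow_natCast, mul_assoc]

lemma mgTerm_eq_zero_of_neg (hq0 : q ≠ 0) (ha : ∀ i, a i ≠ 0) (t : ℂ) {ν : Fin n → ℤ}
    {i : Fin n} (hi : ν i < 0) : mgTerm q t a b a ν = 0 := by
  have harg : q * (a i)⁻¹ * (a i * q ^ ν i) = q ^ (ν i + 1) := by
    rw [mul_assoc, inv_mul_cancel_left₀ (ha i), zpow_add_one₀ hq0, mul_comm]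
  have hfactor : qp q (q * (a i)⁻¹ * (a i * q ^ ν i)) = 0 := by
    rw [harg, qp_zpow_eq_zero hq0 (by lia)]
  rw [mgTerm, prod_eq_zero (mem_univ i) (prod_eq_zero (mem_univ i) (by rw [hfactor, zero_div])),
    mul_zero, zero_mul]

lemma mgSum_eq_mul_degreeSeries (hq0 : q ≠ 0) (ha : ∀ i, a i ≠ 0) (t : ℂ) :
    mgSum q t a b a = (1 - q) ^ n * degreeSeries (mgCoeff q a b) t := by
  have hinj : Function.Injective fun (ν : Fin n → ℕ) i => (ν i : ℤ) :=
    Nat.cast_injective.comp_left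
  have hsupp : Function.support (mgTerm q t a b a) ⊆
      Set.range fun (ν : Fin n → ℕ) i => (ν i : ℤ) := by
    intro ν hν
    have hnonneg (i : Fin n) : 0 ≤ ν i := not_lt.1 fun hi => hν (mgTerm_eq_zero_of_neg hq0 ha t hi)
    exact ⟨fun i => (ν i).toNat, funext fun i => Int.toNat_of_nonneg (hnonneg i)⟩
  rw [mgSum, ← hinj.tsum_eq hsupp, degreeSeries]
  simp only [mgTerm_natCast]

end Coefficients

end MilneGustafson

open MilneGustafson in
theorem milne_gustafson_truncated_evaluation_general {q : ℂ} (hq0 : q ≠ 0) (hq : ‖q‖ < 1) {n : ℕ}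
    {a b : Fin n → ℂ} (ha : ∀ i, a i ≠ 0) {t : ℂ} (ht : ‖t‖ < 1)
    (hab : ∀ i j, ∀ m : ℕ, a i * b j ≠ (q ^ m)⁻¹) :
    mgSum q t a b a =
      (1 - q) ^ n * qp q q ^ n * qp q (t * (∏ i, a i) * ∏ i, b i) /
          (qp q t * ∏ i, ∏ j, qp q (a i * b j)) *
        ∏ i, ∏ j ∈ Ioi i, a j * th q (a i / a j) := by
  have hsolve := qp_mul_eq_of_qdiff hq (continuousAt_degreeSeries_zero (boundedAtFilter_mgCoeff hq))
    (fun _ hs => degreeSeries_mgCoeff_qdiff hq ha hab hs) ht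
  have harg : t * ∏ i, b i * a i = t * (∏ i, a i) * ∏ i, b i := by
    rw [prod_mul_distrib]
    ring
  rw [degreeSeries_zero, mgCoeff_zero hq ha, harg, mul_comm (qp q t),
    ← eq_div_iff (qp_ne_zero_of_norm_lt_one hq ht)] at hsolve
  rw [mgSum_eq_mul_degreeSeries hq0 ha, hsolve]
  ring

/-- Multi-dimensional q-binomial theorem: evaluation of the truncated
Milne–Gustafson sum `I(t;a)`. -/
theorem milne_gustafson_truncated_evaluation
    (q : ℝ) (hq0 : 0 < q) (hq1 : q < 1) (n : ℕ) (hn : 1 ≤ n)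
    (a b : Fin n → ℂ) (ha : ∀ i, a i ≠ 0) (hb : ∀ i, b i ≠ 0)
    (t : ℂ) (ht0 : t ≠ 0) (hupp : ‖t‖ < 1)
    (hab : ∀ i j, ∀ m : ℕ, a i * b j ≠ ((q : ℂ) ^ m)⁻¹) :
    mgSum (q : ℂ) t a b a =
      (1 - (q : ℂ)) ^ n * qp (q : ℂ) (q : ℂ) ^ n *
          qp (q : ℂ) (t * (∏ i, a i) * ∏ i, b i) /
          (qp (q : ℂ) t * ∏ i, ∏ j, qp (q : ℂ) (a i * b j)) *
        ∏ i, ∏ j ∈ Finset.Ioi i, a j * th (q : ℂ) (a i / a j) := by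
  have hq : ‖(q : ℂ)‖ < 1 := by rwa [Complex.norm_of_nonneg hq0.le]
  exact milne_gustafson_truncated_evaluation_general (by exact_mod_cast hq0.ne') hq ha hupp hab
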